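/- Let g(t) = tan(e^{3πi/4}·t) for real t, where tan is the complex tangent. Then g(0) = 0, |g'(t)| ≤ 1 for all real t, and consequently |g(t)| ≤ |t| for all real t. -/

import Mathlib

open Real

lemma aux_norm_cos (s : ℝ) : 1 ≤ ‖Complex.cos ((s : ℂ) * (-1 + Complex.I))‖ := by
  have h1 : Complex.cos ((s : ℂ) * (-1 + Complex.I))
      = ((Real.cos s * Real.cosh s : ℝ) : ℂ) + ((Real.sin s * Real.sinh s : ℝ) : ℂ) * Complex.I := by
    have : (s : ℂ) * (-1 + Complex.I) = ((-s : ℝ) : ℂ) + (s : ℂ) * Complex.I := by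
      push_cast; ring
    rw [this, Complex.cos_add_mul_I]
    push_cast
    rw [Complex.cos_neg, Complex.sin_neg]
    ring
  have h2 : ‖Complex.cos ((s : ℂ) * (-1 + Complex.I))‖ ^ 2
      = (Real.cos s * Real.cosh s) ^ 2 + (Real.sin s * Real.sinh s) ^ 2 := by
    rw [h1, ← Complex.normSq_eq_norm_sq, Complex.normSq_add_mul_I]
  have h3 : |Real.sin s| ≤ |Real.sinh s| := by
    rw [Real.abs_sinh]
    exact (Real.abs_sin_le_abs).trans (Real.self_le_sinh_iff.2 (abs_nonneg s))
  have h4 := sq_le_sq.2 h3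
  have h5 := Real.sin_sq_add_cos_sq s
  have h6 := Real.cosh_sq s
  have h7 : (Real.cos s * Real.cosh s) ^ 2 + (Real.sin s * Real.sinh s) ^ 2
      = Real.cos s ^ 2 + Real.sinh s ^ 2 * (Real.sin s ^ 2 + Real.cos s ^ 2) := by
    rw [mul_pow, mul_pow, h6]; ring
  rw [h7, h5] at h2
  nlinarith [norm_nonneg (Complex.cos ((s : ℂ) * (-1 + Complex.I)))]

lemma aux_w : Complex.exp (3 * (π : ℂ) * Complex.I / 4) = ((√2 / 2 : ℝ) : ℂ) * (-1 + Complex.I) := by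
  have : 3 * (π : ℂ) * Complex.I / 4 = ((π - π / 4 : ℝ) : ℂ) * Complex.I := by
    push_cast; ring
  rw [this, Complex.exp_mul_I, ← Complex.ofReal_cos, ← Complex.ofReal_sin, Real.cos_pi_sub,
    Real.sin_pi_sub, Real.cos_pi_div_four, Real.sin_pi_div_four]
  push_cast; ring

lemma aux_norm_w : ‖Complex.exp (3 * (π : ℂ) * Complex.I / 4)‖ = 1 := by
  have : 3 * (π : ℂ) * Complex.I / 4 = ((π - π / 4 : ℝ) : ℂ) * Complex.I := by
    push_cast; ring
  rw [this, Complex.norm_exp_ofReal_mul_I]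

lemma aux_cos (t : ℝ) :
    1 ≤ ‖Complex.cos (Complex.exp (3 * (π : ℂ) * Complex.I / 4) * t)‖ := by
  have := aux_norm_cos (√2 / 2 * t)
  rw [aux_w]
  convert this using 3
  push_cast; ring

lemma aux_deriv (t : ℝ) :
    HasDerivAt (fun t : ℝ => Complex.tan (Complex.exp (3 * (π : ℂ) * Complex.I / 4) * t))
      (1 / Complex.cos (Complex.exp (3 * (π : ℂ) * Complex.I / 4) * t) ^ 2
        * Complex.exp (3 * (π : ℂ) * Complex.I / 4)) t := by
  have hc : Complex.cos (Complex.exp (3 * (π : ℂ) * Complex.I / 4) * t) ≠ 0 := by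
    intro h
    have := aux_cos t
    rw [h, norm_zero] at this
    linarith
  have h1 : HasDerivAt (fun z : ℂ => Complex.exp (3 * (π : ℂ) * Complex.I / 4) * z)
      (Complex.exp (3 * (π : ℂ) * Complex.I / 4)) (t : ℂ) := by
    simpa using (hasDerivAt_id (t : ℂ)).const_mul (Complex.exp (3 * (π : ℂ) * Complex.I / 4))
  exact ((Complex.hasDerivAt_tan hc).comp (t : ℂ) h1).comp_ofReal

lemma aux_bound (t : ℝ) :
    ‖deriv (fun t : ℝ => Complex.tan (Complex.exp (3 * (π : ℂ) * Complex.I / 4) * t)) t‖ ≤ 1 := by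
  rw [(aux_deriv t).deriv, norm_mul, aux_norm_w, mul_one, norm_div, norm_pow, norm_one]
  exact div_le_one_of_le₀ (one_le_pow₀ (aux_cos t)) (by positivity)

theorem stmt_14 :
    (Complex.tan (Complex.exp (3 * (π : ℂ) * Complex.I / 4) * ((0 : ℝ) : ℂ)) = 0)
    ∧
    (∀ t : ℝ,
      ‖deriv (fun t : ℝ => Complex.tan (Complex.exp (3 * (π : ℂ) * Complex.I / 4) * t)) t‖
        ≤ 1)
    ∧
    (∀ t : ℝ,
      ‖Complex.tan (Complex.exp (3 * (π : ℂ) * Complex.I / 4) * t)‖ ≤ |t|) := by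
  refine ⟨by simp, aux_bound, fun t => ?_⟩
  have := Convex.norm_image_sub_le_of_norm_deriv_le (𝕜 := ℝ) (s := Set.univ) (x := 0) (y := t)
    (fun x _ => (aux_deriv x).differentiableAt) (fun x _ => aux_bound x) convex_univ
    (Set.mem_univ _) (Set.mem_univ _)
  simpa using this
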